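/- Let x be a feasible solution of the subtour elimination LP for s–t path TSP, let k ≥ 1, and let s ∈ U_1 ⊊ U_2 ⊊ … ⊊ U_k ⊆ V∖{t}. Then x(δ(U_1) ∪ δ(U_2) ∪ … ∪ δ(U_k)) ≥ (k − 1) + (1/2)·(x(δ(U_1)) + x(δ(U_k))); in particular x(δ(U_1) ∪ … ∪ δ(U_k)) ≥ k. -/

import Mathlib

/-!
The parts `U_1`, `U_2 \ U_1`, …, `U_k \ U_{k-1}`, `V \ U_k` partition `V`, and every edge of
`δ(U_1) ∪ … ∪ δ(U_k)` leaves exactly two of them.  Each of the `k - 1` middle parts contains neither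
`s` nor `t`, so its cut has weight at least `2`; hence twice the weight of the union is at least
`x(δ(U_1)) + 2(k - 1) + x(δ(U_k))`.  The bound by `k` follows since `x(δ(U_1)), x(δ(U_k)) ≥ 1`.

The double counting is carried out by induction along the chain; `chain_step` adds one set to it.
-/

open Finset

noncomputable section
open scoped Classical

/-- `δ(U)`: the set of edges (unordered pairs of distinct vertices) with exactly one
endpoint in `U`. -/
def cutEdges {V : Type*} [Fintype V] (U : Finset V) : Finset (Sym2 V) :=
  Finset.univ.filter fun e => ∃ u v : V, e = s(u, v) ∧ u ∈ U ∧ v ∉ U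

/-- `f(U) = 1` if `|U ∩ {s,t}| = 1` and `f(U) = 2` otherwise. -/
def lpBound {V : Type*} [Fintype V] (s t : V) (U : Finset V) : ℝ :=
  if (U ∩ {s, t}).card = 1 then 1 else 2

/-- `x` is a feasible solution of the subtour elimination LP for `s`–`t` path TSP. -/
def SubtourLP {V : Type*} [Fintype V] (s t : V) (x : Sym2 V → ℝ) : Prop :=
  (∀ e : Sym2 V, 0 ≤ x e) ∧
  (∀ v : V, ∑ e ∈ cutEdges {v}, x e = lpBound s t {v}) ∧
  (∀ U : Finset V, U.Nonempty → U ≠ Finset.univ → lpBound s t U ≤ ∑ e ∈ cutEdges U, x e)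

lemma mk_mem_cutEdges {V : Type*} [Fintype V] (U : Finset V) (a b : V) :
    s(a, b) ∈ cutEdges U ↔ (a ∈ U ∧ b ∉ U) ∨ (b ∈ U ∧ a ∉ U) := by
  simp only [cutEdges, Finset.mem_filter, Finset.mem_univ, true_and, Sym2.eq_iff]
  constructor
  · rintro ⟨u, v, ⟨rfl, rfl⟩ | ⟨rfl, rfl⟩, h⟩
    · exact Or.inl h
    · exact Or.inr h
  · rintro (h | h)
    · exact ⟨a, b, Or.inl ⟨rfl, rfl⟩, h⟩
    · exact ⟨b, a, Or.inr ⟨rfl, rfl⟩, h⟩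

/-- A cut separating `s` from `t` has weight at least `1`. -/
lemma one_le_cut {V : Type*} [Fintype V] {s t : V} {x : Sym2 V → ℝ} (hx : SubtourLP s t x)
    {A : Finset V} (hs : s ∈ A) (ht : t ∉ A) : 1 ≤ ∑ e ∈ cutEdges A, x e := by
  refine le_trans ?_ (hx.2.2 A ⟨s, hs⟩ (fun h => ht (h ▸ Finset.mem_univ t)))
  unfold lpBound
  split_ifs <;> norm_num

/-- A nonempty set avoiding both `s` and `t` has a cut of weight at least `2`. -/
lemma two_le_cut {V : Type*} [Fintype V] {s t : V} {x : Sym2 V → ℝ} (hx : SubtourLP s t x)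
    {D : Finset V} (hD : D.Nonempty) (hs : s ∉ D) (ht : t ∉ D) :
    2 ≤ ∑ e ∈ cutEdges D, x e := by
  refine le_trans ?_ (hx.2.2 D hD (fun h => ht (h ▸ Finset.mem_univ t)))
  have h : D ∩ {s, t} = ∅ := by
    ext v
    simp only [Finset.mem_inter, Finset.mem_insert, Finset.mem_singleton]
    grind
  simp [lpBound, h]

/-- Extending a chain with top set `A` by `B`.  Here `S` plays the role of the union of the cuts of
the chain so far, all of whose edges have an endpoint in `A`.  The inequality holds because every
edge is counted at least as often in `2 x(S ∪ δ(B)) + x(δ(A))` as in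
`x(δ(B \ A)) + x(δ(B)) + 2 x(S)`. -/
lemma chain_step {V : Type*} [Fintype V] {s t : V} {x : Sym2 V → ℝ} (hx : SubtourLP s t x)
    {A B : Finset V} (hAB : A ⊂ B) (hs : s ∈ A) (ht : t ∉ B) (S : Finset (Sym2 V))
    (hS : ∀ a b : V, s(a, b) ∈ S → a ∈ A ∨ b ∈ A) :
    2 + ∑ e ∈ cutEdges B, x e + 2 * ∑ e ∈ S, x e ≤
      2 * ∑ e ∈ S ∪ cutEdges B, x e + ∑ e ∈ cutEdges A, x e := by
  have hD : 2 ≤ ∑ e ∈ cutEdges (B \ A), x e :=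
    two_le_cut hx (Finset.sdiff_nonempty.2 hAB.2) (by simp [hs]) (by simp [ht])
  have key : ∑ e ∈ cutEdges (B \ A), x e + ∑ e ∈ cutEdges B, x e + 2 * ∑ e ∈ S, x e ≤
      2 * ∑ e ∈ S ∪ cutEdges B, x e + ∑ e ∈ cutEdges A, x e := by
    have ind : ∀ T : Finset (Sym2 V), ∑ e ∈ T, x e = ∑ e, if e ∈ T then x e else 0 := by
      intro T
      simp
    simp only [ind (cutEdges _), ind S, ind (S ∪ _)]
    rw [Finset.mul_sum, Finset.mul_sum, ← Finset.sum_add_distrib, ← Finset.sum_add_distrib,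
      ← Finset.sum_add_distrib]
    refine Finset.sum_le_sum fun e _ => ?_
    induction e using Sym2.ind with
    | _ a b =>
      have h0 := hx.1 s(a, b)
      have hSab := hS a b
      have ha := @hAB.1 a
      have hb := @hAB.1 b
      simp only [Finset.mem_union, mk_mem_cutEdges, Finset.mem_sdiff]
      clear hD hS hx hAB ind
      generalize x s(a, b) = w at *
      grind
  linarith

/-- For a strictly increasing chain `s ∈ U_1 ⊊ … ⊊ U_k ⊆ V∖{t}` of vertex sets,
`x(δ(U_1) ∪ … ∪ δ(U_k)) ≥ (k−1) + (x(δ(U_1)) + x(δ(U_k)))/2`, and in particular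
it is at least `k`. -/
theorem union_of_chain_of_cuts {V : Type*} [Fintype V] (s t : V) (hst : s ≠ t)
    (x : Sym2 V → ℝ) (hx : SubtourLP s t x)
    (k : ℕ) (hk : 1 ≤ k) (U : Fin k → Finset V)
    (hchain : ∀ i j : Fin k, i < j → U i ⊂ U j)
    (hs : s ∈ U ⟨0, by omega⟩) (ht : t ∉ U ⟨k - 1, by omega⟩) :
    ((k : ℝ) - 1) + (1 / 2) *
        ((∑ e ∈ cutEdges (U ⟨0, by omega⟩), x e) +
          ∑ e ∈ cutEdges (U ⟨k - 1, by omega⟩), x e) ≤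
        (∑ e ∈ Finset.univ.biUnion fun i : Fin k => cutEdges (U i), x e) ∧
      (k : ℝ) ≤ ∑ e ∈ Finset.univ.biUnion fun i : Fin k => cutEdges (U i), x e := by
  have mono : ∀ i j : Fin k, i ≤ j → U i ⊆ U j := by
    intro i j hij
    rcases hij.eq_or_lt with rfl | h
    · exact Finset.Subset.refl _
    · exact (hchain i j h).1
  have hs' : ∀ i : Fin k, s ∈ U i := fun i => mono _ i (Nat.zero_le _) hs
  have ht' : ∀ i : Fin k, t ∉ U i := fun i h =>
    ht (mono i _ (Fin.mk_le_mk.2 (Nat.le_sub_one_of_lt i.2)) h)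
  have main : ∀ n : ℕ, ∀ hn : n < k,
      2 * (n : ℝ) + ∑ e ∈ cutEdges (U ⟨0, by omega⟩), x e + ∑ e ∈ cutEdges (U ⟨n, hn⟩), x e ≤
        2 * ∑ e ∈ (Finset.univ.filter fun i : Fin k => i.val ≤ n).biUnion
          fun i => cutEdges (U i), x e := by
    intro n
    induction n with
    | zero =>
      intro hn
      have h : (Finset.univ.filter fun i : Fin k => i.val ≤ 0) = {⟨0, hn⟩} := by
        ext i
        simp [Fin.ext_iff]
      rw [h, Finset.singleton_biUnion]
      push_cast
      linarith
    | succ n ih =>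
      intro hn
      have ih' := ih (by omega)
      have h : (Finset.univ.filter fun i : Fin k => i.val ≤ n + 1) =
          (Finset.univ.filter fun i : Fin k => i.val ≤ n) ∪ {⟨n + 1, hn⟩} := by
        ext i
        simp only [Finset.mem_filter, Finset.mem_univ, true_and, Finset.mem_union,
          Finset.mem_singleton, Fin.ext_iff]
        omega
      rw [h, Finset.union_biUnion, Finset.singleton_biUnion]
      have step := chain_step hx
        (hchain ⟨n, by omega⟩ ⟨n + 1, hn⟩ (Fin.mk_lt_mk.2 (Nat.lt_succ_self n)))
        (hs' _) (ht' _)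
        ((Finset.univ.filter fun i : Fin k => i.val ≤ n).biUnion fun i => cutEdges (U i)) (by
          intro a b hab
          simp only [Finset.mem_biUnion, Finset.mem_filter, Finset.mem_univ, true_and,
            mk_mem_cutEdges] at hab
          obtain ⟨i, hi, ⟨h1, -⟩ | ⟨h1, -⟩⟩ := hab
          · exact Or.inl (mono i _ hi h1)
          · exact Or.inr (mono i _ hi h1))
      push_cast
      linarith
  have hfin := main (k - 1) (by omega)
  have h : (Finset.univ.filter fun i : Fin k => i.val ≤ k - 1) = Finset.univ := by
    ext i
    simp only [Finset.mem_filter, Finset.mem_univ, true_and, iff_true]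
    omega
  rw [h, Nat.cast_sub hk, Nat.cast_one] at hfin
  have h1 := one_le_cut hx hs (ht' _)
  have h2 := one_le_cut hx (hs' _) ht
  constructor <;> linarith
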